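/- For every compact set K ⊂ ℂ, the set {F ∈ X(K) : every element of F is simple} is a Borel subset of the metric space (X(K), d_X). -/

import Mathlib

noncomputable section

open Set Filter Metric MeasureTheory
open scoped Classical

/-- A loop: a continuous `1`-periodic map `ℝ → ℂ`, viewed as a continuous map from the
circle `S¹ = ℝ/ℤ` to the complex plane. -/
structure Loop where
  toFun : ℝ → ℂ
  continuous_toFun : Continuous toFun
  periodic_toFun : Function.Periodic toFun 1

/-- Lifts of orientation-preserving homeomorphisms of the circle `ℝ/ℤ`: continuous strictly
increasing maps of `ℝ` commuting with translation by `1`. -/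
def CircleMaps : Set (ℝ → ℝ) :=
  {φ | Continuous φ ∧ StrictMono φ ∧ ∀ t, φ (t + 1) = φ t + 1}

/-- The supremum distance between loops, up to orientation-preserving reparametrization:
`d_Γ(γ, γ') = inf_{φ,ψ} sup_t |γ(φ t) - γ'(ψ t)|`. -/
def dGamma (γ γ' : Loop) : ℝ :=
  sInf {r : ℝ | 0 ≤ r ∧ ∃ φ ∈ CircleMaps, ∃ ψ ∈ CircleMaps,
    ∀ t : ℝ, dist (γ.toFun (φ t)) (γ'.toFun (ψ t)) ≤ r}

/-- Loops at `d_Γ`-distance zero are identified. -/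
def loopRel (γ γ' : Loop) : Prop := dGamma γ γ' = 0

/-- The space `Γ₀` of loop classes: loops modulo the relation `d_Γ = 0`. -/
def LoopClass : Type := Quot loopRel

/-- The class of a loop in `Γ₀`. -/
def Loop.cls (γ : Loop) : LoopClass := Quot.mk loopRel γ

namespace LoopClass

/-- The image of a loop class (all representatives have the same image). -/
def image (c : LoopClass) : Set ℂ := ⋃ γ ∈ {γ : Loop | γ.cls = c}, Set.range γ.toFun

/-- The diameter of a loop class. -/
def diam (c : LoopClass) : ℝ := Metric.diam c.image

/-- A loop class is trivial if its image is a single point. -/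
def IsTrivial (c : LoopClass) : Prop := ∃ z : ℂ, c.image = {z}

/-- A loop class is simple if it has an injective representative. -/
def IsSimple (c : LoopClass) : Prop :=
  ∃ γ : Loop, γ.cls = c ∧ ∀ s t : ℝ, s ∈ Set.Ico (0:ℝ) 1 → t ∈ Set.Ico (0:ℝ) 1 →
    γ.toFun s = γ.toFun t → s = t

/-- The induced distance `d_Γ` on loop classes. -/
def dist (c c' : LoopClass) : ℝ :=
  sInf {r : ℝ | ∃ γ γ' : Loop, γ.cls = c ∧ γ'.cls = c' ∧ dGamma γ γ' ≤ r}

end LoopClass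

/-- The space `X(K)` of at most countable, locally finite collections of nontrivial loop
classes with images contained in `K`. -/
def LoopCollections (K : Set ℂ) : Set (Set LoopClass) :=
  {F | F.Countable ∧ (∀ c ∈ F, ¬ c.IsTrivial ∧ c.image ⊆ K) ∧
    ∀ ε : ℝ, 0 < ε → {c ∈ F | ε < c.diam}.Finite}

/-- A partial matching between the collections `F` and `G`: a set of pairs in which every
element of `F` and every element of `G` occurs at most once. -/
def IsMatching (F G : Set LoopClass) (π : Set (LoopClass × LoopClass)) : Prop :=
  (∀ p ∈ π, p.1 ∈ F ∧ p.2 ∈ G) ∧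
  (∀ p ∈ π, ∀ q ∈ π, p.1 = q.1 → p = q) ∧
  (∀ p ∈ π, ∀ q ∈ π, p.2 = q.2 → p = q)

/-- The elements of `F` and `G` not matched by `π`. -/
def unmatched (F G : Set LoopClass) (π : Set (LoopClass × LoopClass)) : Set LoopClass :=
  {c ∈ F | ∀ p ∈ π, p.1 ≠ c} ∪ {c ∈ G | ∀ p ∈ π, p.2 ≠ c}

/-- The distance `d_X` between loop collections: the infimum over partial matchings of the
maximum of the matched `d_Γ`-distances and of half the diameters of unmatched loops. -/
def dX (F G : Set LoopClass) : ℝ :=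
  sInf {r : ℝ | 0 ≤ r ∧ ∃ π : Set (LoopClass × LoopClass), IsMatching F G π ∧
    (∀ p ∈ π, LoopClass.dist p.1 p.2 ≤ r) ∧
    ∀ c ∈ unmatched F G π, c.diam / 2 ≤ r}

/-- The space `X(K)`, as a type. -/
def XSpace (K : Set ℂ) : Type := {F : Set LoopClass // F ∈ LoopCollections K}

namespace XSpace

/-- The metric `d_X` on `X(K)`. -/
def dist {K : Set ℂ} (F G : XSpace K) : ℝ := dX F.1 G.1

/-- `d_X`-open subsets of `X(K)`. -/
def IsOpen {K : Set ℂ} (U : Set (XSpace K)) : Prop :=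
  ∀ F ∈ U, ∃ ε : ℝ, 0 < ε ∧ ∀ G : XSpace K, XSpace.dist F G < ε → G ∈ U

/-- The Borel σ-algebra of the metric space `(X(K), d_X)`. -/
instance measurableSpace {K : Set ℂ} : MeasurableSpace (XSpace K) :=
  MeasurableSpace.generateFrom {U | XSpace.IsOpen U}

/-- Bounded `d_X`-continuous real test functions on `X(K)`. -/
def IsBddContinuous {K : Set ℂ} (f : XSpace K → ℝ) : Prop :=
  (∃ M : ℝ, ∀ F, |f F| ≤ M) ∧
  ∀ F : XSpace K, ∀ ε : ℝ, 0 < ε → ∃ ρ : ℝ, 0 < ρ ∧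
    ∀ G : XSpace K, XSpace.dist F G < ρ → |f G - f F| < ε

end XSpace

/-- Weak convergence, as `δ → 0⁺`, of a `δ`-indexed family of Borel measures on
`(X(K), d_X)`: integrals of bounded `d_X`-continuous functions converge. -/
def WeakLimit {K : Set ℂ} (L : ℝ → Measure (XSpace K)) (μ : Measure (XSpace K)) : Prop :=
  ∀ f : XSpace K → ℝ, XSpace.IsBddContinuous f →
    Tendsto (fun δ : ℝ => ∫ F, f F ∂(L δ)) (nhdsWithin 0 (Set.Ioi 0))
      (nhds (∫ F, f F ∂μ))

/-- The Dirac mass at a loop collection (zero if the collection is not an element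
of `X(K)`). -/
def diracAt (K : Set ℂ) (S : Set LoopClass) : Measure (XSpace K) :=
  if h : S ∈ LoopCollections K then Measure.dirac (⟨S, h⟩ : XSpace K) else 0

/-! Let a loop be pinched at scale `ε` if it has a double point that cuts it into two arcs, each of
which moves by at least `ε`. By compactness of the set of candidate double points, not being
pinched at scale `ε` is stable under small perturbations. A loop pinched at scale `ε` has diameter
at least `ε`, and only finitely many loops of a collection are that large, so the collections
without a loop pinched at scale `ε` form an open subset of `X(K)`.

A nontrivial loop class is simple if and only if it is not pinched at any scale, so the set in
question is a countable intersection of such open sets. For the converse direction, every double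
point of a representative `f` bounds an arc on which `f` is constant. Factor `f = g ∘ h`, where
`h` is a monotone degree one circle map whose fibres are the intervals of constancy of `f`: then
`g` is injective, and it represents the same class because `h` is a uniform limit of
homeomorphisms. The map `h` is obtained by integrating over all `a` the largest distance from
`f a` that `f` has reached since time `a`.
-/

section Excursion

open Function

variable {X : Type*} [PseudoMetricSpace X] {f g : ℝ → X} {a b : ℝ}

/-- The largest distance from `f a` reached by `f` on `[a, b]`; it is `0` for `b < a`, the
supremum of the empty set being `0`. It measures the size of an arc and depends continuously on
both endpoints. -/
def excursion (f : ℝ → X) (a b : ℝ) : ℝ :=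
  sSup ((fun u => dist (f u) (f a)) '' Icc a b)

theorem excursion_nonneg (f : ℝ → X) (a b : ℝ) : 0 ≤ excursion f a b :=
  Real.sSup_nonneg (forall_mem_image.2 fun _ _ => dist_nonneg)

theorem excursion_le {r : ℝ} (hr : 0 ≤ r) (h : ∀ u ∈ Icc a b, dist (f u) (f a) ≤ r) :
    excursion f a b ≤ r :=
  Real.sSup_le (forall_mem_image.2 h) hr

theorem dist_le_excursion (hf : Continuous f) {u : ℝ} (hu : u ∈ Icc a b) :
    dist (f u) (f a) ≤ excursion f a b :=
  le_csSup (isCompact_Icc.bddAbove_image (hf.dist continuous_const).continuousOn)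
    (mem_image_of_mem _ hu)

theorem excursion_eq_zero_of_forall_eq (h : ∀ u ∈ Icc a b, f u = f a) : excursion f a b = 0 :=
  (excursion_le le_rfl fun u hu => by rw [h u hu, dist_self]).antisymm (excursion_nonneg f a b)

theorem excursion_eq_zero_of_le (h : b ≤ a) : excursion f a b = 0 :=
  excursion_eq_zero_of_forall_eq fun u hu => by rw [le_antisymm (hu.2.trans h) hu.1]

theorem excursion_eq_zero_iff {X : Type*} [MetricSpace X] {f : ℝ → X} (hf : Continuous f)
    {a b : ℝ} : excursion f a b = 0 ↔ ∀ u ∈ Icc a b, f u = f a :=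
  ⟨fun h _ hu => dist_le_zero.1 ((dist_le_excursion hf hu).trans_eq h),
    excursion_eq_zero_of_forall_eq⟩

theorem monotone_excursion (hf : Continuous f) (a : ℝ) : Monotone (excursion f a) :=
  fun _ _ hbc => excursion_le (excursion_nonneg f a _) fun _ hu =>
    dist_le_excursion hf ⟨hu.1, hu.2.trans hbc⟩

theorem excursion_eq_excursion_of_forall_eq (hf : Continuous f) {s t : ℝ} (hst : s ≤ t)
    (h : ∀ u ∈ Icc s t, f u = f s) (a : ℝ) : excursion f a s = excursion f a t := by
  refine (monotone_excursion hf a hst).antisymm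
    (excursion_le (excursion_nonneg f a s) fun u hu => ?_)
  rcases le_total u s with hus | hsu
  · exact dist_le_excursion hf ⟨hu.1, hus⟩
  rw [h u ⟨hsu, hu.2⟩]
  rcases le_total a s with has | hsa
  · exact dist_le_excursion hf ⟨has, le_rfl⟩
  · rw [← h a ⟨hsa, hu.1.trans hu.2⟩, dist_self]
    exact excursion_nonneg f a s

theorem continuous_excursion (hf : Continuous f) :
    Continuous fun p : ℝ × ℝ => excursion f p.1 p.2 := by
  have h_max (a b : ℝ) : excursion f a b = excursion f a (max a b) := by
    rcases le_total a b with hab | hba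
    · rw [max_eq_right hab]
    · rw [max_eq_left hba, excursion_eq_zero_of_le hba, excursion_eq_zero_of_le le_rfl]
  have h_segment (a b : ℝ) :
      Icc a (max a b) = (fun v : ℝ => a + v • (max a b - a)) '' Icc 0 1 := by
    rw [← segment_eq_image', segment_eq_Icc (le_max_left a b)]
  have h_eq : (fun p : ℝ × ℝ => excursion f p.1 p.2) = fun p => sSup ((fun v : ℝ =>
      dist (f (p.1 + v • (max p.1 p.2 - p.1))) (f p.1)) '' Icc 0 1) := by
    funext p
    rw [h_max, excursion, h_segment, image_image]
  rw [h_eq]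
  apply isCompact_Icc.continuous_sSup
  fun_prop

theorem excursion_comp_orderIso (f : ℝ → X) (e : ℝ ≃o ℝ) (a b : ℝ) :
    excursion (f ∘ e) a b = excursion f (e a) (e b) := by
  simp only [excursion, ← e.image_Icc, image_image, comp_apply]

theorem excursion_le_excursion_add {r : ℝ} (hg : Continuous g) (h : ∀ t, dist (f t) (g t) ≤ r)
    (a b : ℝ) : excursion f a b ≤ excursion g a b + 2 * r := by
  have hr : 0 ≤ r := dist_nonneg.trans (h 0)
  refine excursion_le (add_nonneg (excursion_nonneg g a b) (by positivity)) fun u hu => ?_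
  calc dist (f u) (f a)
      ≤ dist (f u) (g u) + dist (g u) (g a) + dist (g a) (f a) := dist_triangle4 ..
    _ ≤ r + excursion g a b + r := by
        gcongr
        · exact h u
        · exact dist_le_excursion hg hu
        · exact dist_comm (g a) (f a) ▸ h a
    _ = excursion g a b + 2 * r := by ring

theorem excursion_add_period {c : ℝ} (hf : Periodic f c) (a b : ℝ) :
    excursion f (a + c) (b + c) = excursion f a b := by
  rw [← OrderIso.addRight_apply c a, ← OrderIso.addRight_apply c b, ← excursion_comp_orderIso]
  exact congrArg (excursion · a b) (funext hf)

theorem excursion_eq_excursion_period {c : ℝ} (hf : Continuous f) (hp : Periodic f c) (hc : 0 < c)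
    (h : a + c ≤ b) : excursion f a b = excursion f a (a + c) := by
  refine (excursion_le (excursion_nonneg _ _ _) fun u _ => ?_).antisymm
    (monotone_excursion hf a h)
  obtain ⟨v, hv, huv⟩ := hp.exists_mem_Ico hc u a
  rw [huv]
  exact dist_le_excursion hf (Ico_subset_Icc_self hv)

end Excursion

section CumulativeExcursion

open Function

variable {X : Type*} [PseudoMetricSpace X] {f : ℝ → X} {c : ℝ}

/-- The integral over all base points of the increments of the excursions of `f` from time `0`
to time `t`. For periodic `f` it is a substitute for arc length that needs no rectifiability: a
continuous function of `t`, increasing exactly where `f` is not constant. -/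
def cumulativeExcursion (f : ℝ → X) (t : ℝ) : ℝ :=
  ∫ a, (excursion f a t - excursion f a 0)

theorem excursion_sub_excursion_eq_zero (hf : Continuous f) (hp : Periodic f c) (hc : 0 < c)
    {s t a : ℝ} (ha : a ∉ Icc (min s t - c) (max s t)) :
    excursion f a t - excursion f a s = 0 := by
  rcases le_or_gt (min s t - c) a with h | h
  · have hmax : max s t < a := not_le.1 fun h' => ha ⟨h, h'⟩
    rw [max_lt_iff] at hmax
    rw [excursion_eq_zero_of_le hmax.1.le, excursion_eq_zero_of_le hmax.2.le, sub_zero]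
  · rw [lt_sub_iff_add_lt, lt_min_iff] at h
    rw [excursion_eq_excursion_period hf hp hc h.1.le,
      excursion_eq_excursion_period hf hp hc h.2.le, sub_self]

theorem continuous_excursion_sub_excursion (hf : Continuous f) (s t : ℝ) :
    Continuous fun a => excursion f a t - excursion f a s :=
  ((continuous_excursion hf).comp (continuous_id.prodMk continuous_const)).sub
    ((continuous_excursion hf).comp (continuous_id.prodMk continuous_const))

theorem hasCompactSupport_excursion_sub_excursion (hf : Continuous f) (hp : Periodic f c)
    (hc : 0 < c) (s t : ℝ) : HasCompactSupport fun a => excursion f a t - excursion f a s :=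
  HasCompactSupport.intro isCompact_Icc fun _ => excursion_sub_excursion_eq_zero hf hp hc

theorem cumulativeExcursion_sub (hf : Continuous f) (hp : Periodic f c) (hc : 0 < c) (s t : ℝ) :
    cumulativeExcursion f t - cumulativeExcursion f s =
      ∫ a, (excursion f a t - excursion f a s) := by
  have h_int (t : ℝ) : Integrable fun a => excursion f a t - excursion f a 0 :=
    (continuous_excursion_sub_excursion hf 0 t).integrable_of_hasCompactSupport
      (hasCompactSupport_excursion_sub_excursion hf hp hc 0 t)
  rw [cumulativeExcursion, cumulativeExcursion, ← integral_sub (h_int t) (h_int s)]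
  simp only [sub_sub_sub_cancel_right]

theorem continuous_cumulativeExcursion (hf : Continuous f) (hp : Periodic f c) (hc : 0 < c) :
    Continuous (cumulativeExcursion f) := by
  refine continuous_iff_continuousAt.2 fun t₀ => ?_
  have h_on : ContinuousOn (cumulativeExcursion f) (Ioo (t₀ - 1) (t₀ + 1)) := by
    refine continuousOn_integral_of_compact_support (f := fun t a => excursion f a t -
      excursion f a 0) (k := Icc (min 0 (t₀ - 1) - c) (max 0 (t₀ + 1))) isCompact_Icc
      (Continuous.continuousOn ?_) fun t a ht ha => ?_
    · exact ((continuous_excursion hf).comp continuous_swap).sub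
        ((continuous_excursion hf).comp (continuous_snd.prodMk continuous_const))
    · refine excursion_sub_excursion_eq_zero hf hp hc fun h => ha (Icc_subset_Icc ?_ ?_ h)
      · gcongr
        exact ht.1.le
      · gcongr
        exact ht.2.le
  exact h_on.continuousAt (Ioo_mem_nhds (by linarith) (by linarith))

theorem monotone_cumulativeExcursion (hf : Continuous f) (hp : Periodic f c) (hc : 0 < c) :
    Monotone (cumulativeExcursion f) := fun s t hst => by
  rw [← sub_nonneg, cumulativeExcursion_sub hf hp hc]
  exact integral_nonneg fun a => sub_nonneg.2 (monotone_excursion hf a hst)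

theorem cumulativeExcursion_add_period (hf : Continuous f) (hp : Periodic f c) (hc : 0 < c)
    (t : ℝ) :
    cumulativeExcursion f (t + c) = cumulativeExcursion f t + cumulativeExcursion f c := by
  have h_zero (a : ℝ) : excursion f (a + c) c = excursion f a 0 := by
    simpa only [zero_add] using excursion_add_period hp a 0
  rw [← sub_eq_iff_eq_add, cumulativeExcursion_sub hf hp hc, ← integral_add_right_eq_self _ c,
    cumulativeExcursion]
  simp only [excursion_add_period hp, h_zero]

theorem cumulativeExcursion_eq_iff {X : Type*} [MetricSpace X] {f : ℝ → X} (hf : Continuous f)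
    (hp : Periodic f c) (hc : 0 < c) {s t : ℝ} (hst : s ≤ t) :
    cumulativeExcursion f s = cumulativeExcursion f t ↔ ∀ u ∈ Icc s t, f u = f s := by
  rw [eq_comm, ← sub_eq_zero, cumulativeExcursion_sub hf hp hc]
  refine ⟨fun h => ?_, fun h => ?_⟩
  · rw [← excursion_eq_zero_iff hf]
    by_contra hne
    refine h.not_gt ((continuous_excursion_sub_excursion hf s t)
      |>.integral_pos_of_hasCompactSupport_nonneg_nonzero (x := s)
        (hasCompactSupport_excursion_sub_excursion hf hp hc s t)
        (fun a => sub_nonneg.2 (monotone_excursion hf a hst)) ?_)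
    rwa [excursion_eq_zero_of_le le_rfl, sub_zero]
  · simp only [excursion_eq_excursion_of_forall_eq hf hst h, sub_self, integral_zero]

end CumulativeExcursion

section Factorization

open Function

theorem isQuotientMap_of_continuous_circleDeg1Lift {h : CircleDeg1Lift} (hh : Continuous h) :
    Topology.IsQuotientMap h := by
  have h_proper : IsProperMap h := by
    refine isProperMap_iff_tendsto_cocompact.2 ⟨hh, ?_⟩
    rw [cocompact_eq_atBot_atTop]
    exact h.tendsto_atBot.sup_sup h.tendsto_atTop
  exact h_proper.isClosedMap.isQuotientMap hh (h.continuous_iff_surjective.1 hh)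

variable {X : Type*} [MetricSpace X] {f : ℝ → X}

theorem cumulativeExcursion_pos {c : ℝ} (hf : Continuous f) (hp : Periodic f c) (hc : 0 < c)
    (hne : ¬ ∀ t, f t = f 0) : 0 < cumulativeExcursion f c := by
  have h_zero : cumulativeExcursion f 0 = 0 := by
    simp only [cumulativeExcursion, sub_self, integral_zero]
  refine (h_zero ▸ monotone_cumulativeExcursion hf hp hc hc.le).lt_of_ne fun h => hne fun t => ?_
  obtain ⟨u, hu, htu⟩ := hp.exists_mem_Ico₀ hc t
  rw [htu]
  exact (cumulativeExcursion_eq_iff hf hp hc hc.le).1 (h_zero.trans h) u (Ico_subset_Icc_self hu)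

theorem exists_circleDeg1Lift_eq_iff (hf : Continuous f) (hp : Periodic f 1)
    (hne : ¬ ∀ t, f t = f 0) :
    ∃ h : CircleDeg1Lift, Continuous h ∧
      ∀ s t, s ≤ t → (h s = h t ↔ ∀ u ∈ Icc s t, f u = f s) := by
  have h_pos := cumulativeExcursion_pos hf hp one_pos hne
  refine ⟨⟨⟨fun t => cumulativeExcursion f t / cumulativeExcursion f 1, ?_⟩, fun t => ?_⟩,
    (continuous_cumulativeExcursion hf hp one_pos).div_const _, fun s t hst => ?_⟩
  · exact (monotone_cumulativeExcursion hf hp one_pos).div_const h_pos.le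
  · change _ / _ = _ / _ + 1
    rw [cumulativeExcursion_add_period hf hp one_pos, add_div, div_self h_pos.ne']
  · rw [← cumulativeExcursion_eq_iff hf hp one_pos hst]
    exact div_left_inj' h_pos.ne'

theorem exists_comp_circleDeg1Lift_eq (hf : Continuous f) (hp : Periodic f 1)
    (hne : ¬ ∀ t, f t = f 0) :
    ∃ (g : ℝ → X) (h : CircleDeg1Lift), Continuous g ∧ Periodic g 1 ∧ Continuous h ∧
      (∀ t, g (h t) = f t) ∧ ∀ s t, s ≤ t → (h s = h t ↔ ∀ u ∈ Icc s t, f u = f s) := by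
  obtain ⟨h, hh, h_iff⟩ := exists_circleDeg1Lift_eq_iff hf hp hne
  have h_factors : FactorsThrough f h := fun s t hst => by
    rcases le_total s t with hle | hle
    · exact ((h_iff s t hle).1 hst t ⟨hle, le_rfl⟩).symm
    · exact (h_iff t s hle).1 hst.symm s ⟨hle, le_rfl⟩
  have h_quot : Topology.IsQuotientMap (⟨h, hh⟩ : C(ℝ, ℝ)) :=
    isQuotientMap_of_continuous_circleDeg1Lift hh
  let g := h_quot.lift ⟨f, hf⟩ h_factors
  have h_comp (t : ℝ) : g (h t) = f t :=
    DFunLike.congr_fun (h_quot.lift_comp ⟨f, hf⟩ h_factors) t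
  refine ⟨g, h, g.continuous, fun x => ?_, hh, h_comp, h_iff⟩
  obtain ⟨t, rfl⟩ := h.continuous_iff_surjective.1 hh x
  rw [← h.map_add_one, h_comp, h_comp, hp]

theorem exists_injOn_comp_circleDeg1Lift_eq (hf : Continuous f) (hp : Periodic f 1)
    (hne : ¬ ∀ t, f t = f 0)
    (h_arc : ∀ s t, s ≤ t → t ≤ s + 1 → f s = f t →
      (∀ u ∈ Icc s t, f u = f s) ∨ ∀ u ∈ Icc t (s + 1), f u = f t) :
    ∃ (g : ℝ → X) (h : CircleDeg1Lift), Continuous g ∧ Periodic g 1 ∧ Continuous h ∧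
      (∀ t, g (h t) = f t) ∧ InjOn g (Ico 0 1) := by
  obtain ⟨g, h, hg, hgp, hh, h_comp, h_iff⟩ := exists_comp_circleDeg1Lift_eq hf hp hne
  refine ⟨g, h, hg, hgp, hh, h_comp, fun x hx y hy hxy => ?_⟩
  wlog hlt : x < y generalizing x y
  · rcases (not_lt.1 hlt).eq_or_lt with h_eq | hlt'
    · exact h_eq.symm
    · exact (this y hy x hx hxy.symm hlt').symm
  have h_surj := h.continuous_iff_surjective.1 hh
  obtain ⟨⟨s, rfl⟩, ⟨t, rfl⟩⟩ := h_surj x, h_surj y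
  have hst : s < t := h.monotone.reflect_lt hlt
  have hlt' : h t < h (s + 1) := by
    rw [h.map_add_one]
    linarith [hx.1, hy.2]
  have hts : t < s + 1 := h.monotone.reflect_lt hlt'
  rw [h_comp, h_comp] at hxy
  rcases h_arc s t hst.le hts.le hxy with h_const | h_const
  · exact (h_iff s t hst.le).2 h_const
  · exact absurd ((h_iff t (s + 1) hts.le).2 h_const) hlt'.ne

end Factorization

section IsPinched

open Function
open scoped Topology

variable {X : Type*} [PseudoMetricSpace X] {f g : ℝ → X} {r δ ε : ℝ}

/-- A `1`-periodic curve is pinched at scale `ε` with gap `δ` if two of its points at distance at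
most `δ` cut one period into two arcs of excursion at least `ε` each. For `δ = 0` these two points
form a genuine double point. -/
def IsPinched (f : ℝ → X) (δ ε : ℝ) : Prop :=
  ∃ s t, s ≤ t ∧ t ≤ s + 1 ∧ dist (f s) (f t) ≤ δ ∧ ε ≤ excursion f s t ∧ ε ≤ excursion f t (s + 1)

theorem IsPinched.anti {ε' : ℝ} (h : IsPinched f δ ε) (hε : ε' ≤ ε) : IsPinched f δ ε' := by
  obtain ⟨s, t, hst, hts, h_dist, h_exc, h_exc'⟩ := h
  exact ⟨s, t, hst, hts, h_dist, hε.trans h_exc, hε.trans h_exc'⟩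

theorem IsPinched.of_dist_comp_le (hf : Continuous f) {e : ℝ ≃o ℝ} (he : ∀ t, e (t + 1) = e t + 1)
    (hgf : ∀ t, dist (g t) (f (e t)) ≤ r) (h : IsPinched g δ ε) :
    IsPinched f (δ + 2 * r) (ε - 2 * r) := by
  obtain ⟨s, t, hst, hts, h_dist, h_exc, h_exc'⟩ := h
  have h_exc_le (a b : ℝ) : excursion g a b ≤ excursion f (e a) (e b) + 2 * r :=
    excursion_comp_orderIso f e a b ▸ excursion_le_excursion_add (hf.comp e.continuous) hgf a b
  refine ⟨e s, e t, e.monotone hst, he s ▸ e.monotone hts, ?_, ?_, ?_⟩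
  · calc dist (f (e s)) (f (e t))
        ≤ dist (f (e s)) (g s) + dist (g s) (g t) + dist (g t) (f (e t)) := dist_triangle4 ..
      _ ≤ r + δ + r := by
          gcongr
          · exact dist_comm (g s) _ ▸ hgf s
          · exact hgf t
      _ = δ + 2 * r := by ring
  · exact sub_le_iff_le_add.2 (h_exc.trans (h_exc_le s t))
  · exact sub_le_iff_le_add.2 (he s ▸ h_exc'.trans (h_exc_le t (s + 1)))

theorem IsPinched.exists_mem_Ico (hp : Periodic f 1) (h : IsPinched f δ ε) :
    ∃ s ∈ Ico (0 : ℝ) 1, ∃ t ∈ Icc s (s + 1),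
      dist (f s) (f t) ≤ δ ∧ ε ≤ excursion f s t ∧ ε ≤ excursion f t (s + 1) := by
  obtain ⟨s, t, hst, hts, h_dist, h_exc, h_exc'⟩ := h
  have hpn : Periodic f (-⌊s⌋ : ℝ) := by simpa only [mul_one] using (hp.int_mul ⌊s⌋).neg
  refine ⟨s + -⌊s⌋, ⟨by linarith [Int.floor_le s], by linarith [Int.lt_floor_add_one s]⟩,
    t + -⌊s⌋, ⟨by linarith, by linarith⟩, ?_, ?_, ?_⟩
  · rwa [hpn, hpn]
  · rwa [excursion_add_period hpn]
  · rwa [add_right_comm, excursion_add_period hpn]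

theorem eventually_not_isPinched (hf : Continuous f) (hp : Periodic f 1)
    (h : ¬ IsPinched f 0 ε) : ∀ᶠ δ in 𝓝 0, ¬ IsPinched f δ (ε - δ) := by
  let P : Set (ℝ × ℝ × ℝ) := {q | q.2.1 ≤ q.2.2 ∧ q.2.2 ≤ q.2.1 + 1 ∧
    dist (f q.2.1) (f q.2.2) ≤ q.1 ∧ ε - q.1 ≤ excursion f q.2.1 q.2.2 ∧
    ε - q.1 ≤ excursion f q.2.2 (q.2.1 + 1)}
  have hP : IsClosed P := by
    have h_exc : Continuous fun q : ℝ × ℝ × ℝ => excursion f q.2.1 q.2.2 :=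
      (continuous_excursion hf).comp continuous_snd
    have h_exc' : Continuous fun q : ℝ × ℝ × ℝ => excursion f q.2.2 (q.2.1 + 1) :=
      (continuous_excursion hf).comp (g := fun p : ℝ × ℝ => excursion f p.1 p.2)
        (f := fun q : ℝ × ℝ × ℝ => (q.2.2, q.2.1 + 1)) (by fun_prop)
    simp only [P, ofPred_and]
    exact (isClosed_le (by fun_prop) (by fun_prop)).inter <|
      (isClosed_le (by fun_prop) (by fun_prop)).inter <|
      (isClosed_le (by fun_prop) (by fun_prop)).inter <|
      (isClosed_le (by fun_prop) h_exc).inter (isClosed_le (by fun_prop) h_exc')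
  have h_compact : IsCompact (Icc (0 : ℝ) 1 ×ˢ Icc (0 : ℝ) 2) := isCompact_Icc.prod isCompact_Icc
  have h_forall : ∀ᶠ δ in 𝓝 0, ∀ p ∈ Icc (0 : ℝ) 1 ×ˢ Icc (0 : ℝ) 2, (δ, p) ∉ P := by
    refine h_compact.eventually_forall_of_forall_eventually fun p _ =>
      hP.isOpen_compl.mem_nhds fun ⟨hst, hts, h_dist, h_exc, h_exc'⟩ => h ?_
    rw [sub_zero] at h_exc h_exc'
    exact ⟨p.1, p.2, hst, hts, h_dist, h_exc, h_exc'⟩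
  refine h_forall.mono fun δ hδ h_pinched => ?_
  obtain ⟨s, hs, t, ht, h_rest⟩ := h_pinched.exists_mem_Ico hp
  exact hδ (s, t) ⟨Ico_subset_Icc_self hs, by linarith [hs.1, ht.1], by linarith [hs.2, ht.2]⟩
    ⟨ht.1, ht.2, h_rest⟩

theorem not_isPinched_of_injOn {X : Type*} [MetricSpace X] {f : ℝ → X} (hp : Periodic f 1)
    (h_inj : InjOn f (Ico 0 1)) (hε : 0 < ε) : ¬ IsPinched f 0 ε := by
  rintro ⟨s, t, hst, hts, h_dist, h_exc, h_exc'⟩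
  have h_fract (u : ℝ) : f (Int.fract u) = f u := by
    simpa only [mul_one, Int.self_sub_floor] using hp.sub_int_mul_eq (x := u) ⌊u⌋
  have h_eq : Int.fract t = Int.fract s := by
    refine h_inj ⟨Int.fract_nonneg t, Int.fract_lt_one t⟩
      ⟨Int.fract_nonneg s, Int.fract_lt_one s⟩ ?_
    rw [h_fract, h_fract, dist_le_zero.1 h_dist]
  obtain ⟨z, hz⟩ := Int.fract_eq_fract.1 h_eq
  have hz0 : (0 : ℝ) ≤ z := by linarith
  have hz1 : (z : ℝ) ≤ 1 := by linarith
  norm_cast at hz0 hz1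
  obtain rfl | rfl : z = 0 ∨ z = 1 := by omega
  · rw [excursion_eq_zero_of_le (by push_cast at hz; linarith)] at h_exc
    exact h_exc.not_gt hε
  · rw [excursion_eq_zero_of_le (by push_cast at hz; linarith)] at h_exc'
    exact h_exc'.not_gt hε

theorem forall_eq_or_forall_eq_of_forall_not_isPinched {X : Type*} [MetricSpace X] {f : ℝ → X}
    (hf : Continuous f) (h : ∀ ε > 0, ¬ IsPinched f 0 ε) {s t : ℝ} (hst : s ≤ t) (hts : t ≤ s + 1)
    (h_eq : f s = f t) : (∀ u ∈ Icc s t, f u = f s) ∨ ∀ u ∈ Icc t (s + 1), f u = f t := by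
  rw [← excursion_eq_zero_iff hf, ← excursion_eq_zero_iff hf]
  by_contra! hne
  have h_pos := (excursion_nonneg f s t).lt_of_ne' hne.1
  have h_pos' := (excursion_nonneg f t (s + 1)).lt_of_ne' hne.2
  exact h _ (lt_min h_pos h_pos')
    ⟨s, t, hst, hts, dist_le_zero.2 h_eq, min_le_left .., min_le_right ..⟩

end IsPinched

section CircleMaps

theorem id_mem_circleMaps : id ∈ CircleMaps :=
  ⟨continuous_id, strictMono_id, fun _ => rfl⟩

theorem comp_mem_circleMaps {φ ψ : ℝ → ℝ} (hφ : φ ∈ CircleMaps) (hψ : ψ ∈ CircleMaps) :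
    φ ∘ ψ ∈ CircleMaps :=
  ⟨hφ.1.comp hψ.1, hφ.2.1.comp hψ.2.1, fun t => by
    simp only [Function.comp_apply, hψ.2.2, hφ.2.2]⟩

theorem exists_orderIso_of_mem_circleMaps {φ : ℝ → ℝ} (hφ : φ ∈ CircleMaps) :
    ∃ e : ℝ ≃o ℝ, ⇑e = φ ∧ ⇑e.symm ∈ CircleMaps := by
  let h : CircleDeg1Lift := ⟨⟨φ, hφ.2.1.monotone⟩, hφ.2.2⟩
  let e : ℝ ≃o ℝ := hφ.2.1.orderIsoOfSurjective φ (h.continuous_iff_surjective.1 hφ.1)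
  refine ⟨e, rfl, e.symm.continuous, e.symm.strictMono, fun t => ?_⟩
  rw [e.symm_apply_eq]
  exact (congrArg (· + 1) (e.apply_symm_apply t)).symm.trans (hφ.2.2 _).symm

end CircleMaps

section Loop

open Function
open scoped Topology

variable {γ γ' γ'' : Loop} {r r' : ℝ}

theorem Loop.isCompact_range (γ : Loop) : IsCompact (range γ.toFun) :=
  γ.periodic_toFun.compact_of_continuous one_ne_zero γ.continuous_toFun

/-- `γ.IsNear γ' r`: after a reparametrization of `γ'` alone, the loops `γ` and `γ'` are uniformly
within `r` of each other. This replaces the infimum over two reparametrizations in `dGamma`. -/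
def Loop.IsNear (γ γ' : Loop) (r : ℝ) : Prop :=
  ∃ φ ∈ CircleMaps, ∀ t, dist (γ.toFun t) (γ'.toFun (φ t)) ≤ r

theorem Loop.IsNear.refl (γ : Loop) (hr : 0 ≤ r) : γ.IsNear γ r :=
  ⟨id, id_mem_circleMaps, fun _ => (dist_self _).trans_le hr⟩

theorem Loop.IsNear.symm (h : γ.IsNear γ' r) : γ'.IsNear γ r := by
  obtain ⟨φ, hφ, hr⟩ := h
  obtain ⟨e, rfl, he⟩ := exists_orderIso_of_mem_circleMaps hφ
  refine ⟨e.symm, he, fun t => ?_⟩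
  simpa only [e.apply_symm_apply, dist_comm] using hr (e.symm t)

theorem Loop.IsNear.trans (h : γ.IsNear γ' r) (h' : γ'.IsNear γ'' r') :
    γ.IsNear γ'' (r + r') := by
  obtain ⟨φ, hφ, hr⟩ := h
  obtain ⟨ψ, hψ, hr'⟩ := h'
  exact ⟨ψ ∘ φ, comp_mem_circleMaps hψ hφ, fun t =>
    (dist_triangle _ _ _).trans (add_le_add (hr t) (hr' (φ t)))⟩

theorem Loop.IsNear.dGamma_le (h : γ.IsNear γ' r) : dGamma γ γ' ≤ r := by
  obtain ⟨φ, hφ, hr⟩ := h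
  exact csInf_le ⟨0, fun _ hx => hx.1⟩
    ⟨dist_nonneg.trans (hr 0), id, id_mem_circleMaps, φ, hφ, hr⟩

theorem Loop.isNear_of_dGamma_lt (h : dGamma γ γ' < r) : γ.IsNear γ' r := by
  obtain ⟨C, hC⟩ := Metric.isBounded_iff.1 (γ.isCompact_range.union γ'.isCompact_range).isBounded
  have h_bound (t : ℝ) : dist (γ.toFun t) (γ'.toFun t) ≤ C :=
    hC (Or.inl (mem_range_self t)) (Or.inr (mem_range_self t))
  obtain ⟨r', ⟨_, φ, hφ, ψ, hψ, h_dist⟩, hr'⟩ := exists_lt_of_csInf_lt (by exact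
    ⟨C, dist_nonneg.trans (h_bound 0), id, id_mem_circleMaps, id, id_mem_circleMaps, h_bound⟩) h
  obtain ⟨e, rfl, he⟩ := exists_orderIso_of_mem_circleMaps hφ
  refine ⟨ψ ∘ e.symm, comp_mem_circleMaps hψ he, fun t => ?_⟩
  simpa only [comp_apply, e.apply_symm_apply] using (h_dist (e.symm t)).trans hr'.le

theorem loopRel_iff : loopRel γ γ' ↔ ∀ r > 0, γ.IsNear γ' r := by
  refine ⟨fun h r hr => Loop.isNear_of_dGamma_lt (h.trans_lt hr), fun h => le_antisymm
    (le_of_forall_gt_imp_ge_of_dense fun r hr => (h r hr).dGamma_le)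
    (Real.sInf_nonneg fun _ hx => hx.1)⟩

theorem equivalence_loopRel : Equivalence loopRel where
  refl γ := loopRel_iff.2 fun _ hr => .refl γ hr.le
  symm h := loopRel_iff.2 fun r hr => (loopRel_iff.1 h r hr).symm
  trans h h' := loopRel_iff.2 fun r hr => add_halves r ▸
    (loopRel_iff.1 h _ (half_pos hr)).trans (loopRel_iff.1 h' _ (half_pos hr))

theorem Loop.cls_eq_cls_iff : γ.cls = γ'.cls ↔ ∀ r > 0, γ.IsNear γ' r :=
  (equivalence_loopRel.quot_mk_eq_iff γ γ').trans loopRel_iff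

theorem Loop.image_cls (γ : Loop) : γ.cls.image = range γ.toFun := by
  refine (iUnion₂_subset fun γ' hγ' => ?_).antisymm
    (subset_biUnion_of_mem (u := fun γ' : Loop => range γ'.toFun) (mem_ofPred.2 rfl))
  rintro _ ⟨t, rfl⟩
  rw [← γ.isCompact_range.isClosed.closure_eq, Metric.mem_closure_iff]
  intro r hr
  obtain ⟨φ, -, h⟩ := Loop.cls_eq_cls_iff.1 hγ' _ (half_pos hr)
  exact ⟨_, mem_range_self _, (h t).trans_lt (half_lt_self hr)⟩

theorem Loop.excursion_le_diam_cls (γ : Loop) (s t : ℝ) :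
    excursion γ.toFun s t ≤ γ.cls.diam := by
  rw [LoopClass.diam, γ.image_cls]
  exact excursion_le Metric.diam_nonneg fun u _ => Metric.dist_le_diam_of_mem
    γ.isCompact_range.isBounded (mem_range_self u) (mem_range_self s)

theorem Loop.IsNear.diam_cls_le (h : γ.IsNear γ' r) : γ.cls.diam ≤ γ'.cls.diam + 2 * r := by
  obtain ⟨φ, -, hr⟩ := h
  have h_nonneg : 0 ≤ r := dist_nonneg.trans (hr 0)
  rw [LoopClass.diam, LoopClass.diam, γ.image_cls, γ'.image_cls]
  refine Metric.diam_le_of_forall_dist_le (by positivity) ?_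
  rintro _ ⟨s, rfl⟩ _ ⟨t, rfl⟩
  calc dist (γ.toFun s) (γ.toFun t)
      ≤ dist (γ.toFun s) (γ'.toFun (φ s)) + dist (γ'.toFun (φ s)) (γ'.toFun (φ t))
        + dist (γ'.toFun (φ t)) (γ.toFun t) := dist_triangle4 ..
    _ ≤ r + Metric.diam (range γ'.toFun) + r := by
        gcongr
        · exact hr s
        · exact Metric.dist_le_diam_of_mem γ'.isCompact_range.isBounded (mem_range_self _)
            (mem_range_self _)
        · exact dist_comm (γ.toFun t) _ ▸ hr t
    _ = Metric.diam (range γ'.toFun) + 2 * r := by ring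

theorem Loop.IsNear.isPinched {δ ε : ℝ} (h : γ.IsNear γ' r) (hγ : IsPinched γ.toFun δ ε) :
    IsPinched γ'.toFun (δ + 2 * r) (ε - 2 * r) := by
  obtain ⟨φ, hφ, hr⟩ := h
  obtain ⟨e, rfl, -⟩ := exists_orderIso_of_mem_circleMaps hφ
  exact hγ.of_dist_comp_le γ'.continuous_toFun hφ.2.2 hr

theorem Loop.isNear_of_dist_cls_lt (h : γ.cls.dist γ'.cls < r) : γ.IsNear γ' r := by
  obtain ⟨r', ⟨γ₁, γ₁', hγ₁, hγ₁', h_le⟩, hr'⟩ :=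
    exists_lt_of_csInf_lt (by exact ⟨_, γ, γ', rfl, rfl, le_rfl⟩) h
  have h_pos : 0 < (r - r') / 3 := by linarith
  have h_near : γ₁.IsNear γ₁' (r' + (r - r') / 3) :=
    Loop.isNear_of_dGamma_lt (h_le.trans_lt (lt_add_of_pos_right r' h_pos))
  have h_trans := ((Loop.cls_eq_cls_iff.1 hγ₁.symm _ h_pos).trans h_near).trans
    (Loop.cls_eq_cls_iff.1 hγ₁' _ h_pos)
  convert h_trans using 1
  ring

theorem Loop.cls_eq_cls_of_comp_circleDeg1Lift {h : CircleDeg1Lift} (hh : Continuous h)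
    (h_comp : ∀ t, γ'.toFun (h t) = γ.toFun t) : γ.cls = γ'.cls := by
  refine Loop.cls_eq_cls_iff.2 fun r hr => ?_
  -- `h` need not be injective, but these interpolations with the identity are, for `0 < η`.
  let φ (η t : ℝ) : ℝ := (1 - η) * h t + η * t
  have h_near : ∀ᶠ η in 𝓝 (0 : ℝ), ∀ t ∈ Icc (0 : ℝ) 1,
      dist (γ.toFun t) (γ'.toFun (φ η t)) < r := by
    refine isCompact_Icc.eventually_forall_of_forall_eventually fun t _ => ?_
    have h_cont : Continuous fun q : ℝ × ℝ => dist (γ.toFun q.2) (γ'.toFun (φ q.1 q.2)) :=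
      (γ.continuous_toFun.comp continuous_snd).dist (γ'.continuous_toFun.comp (by fun_prop))
    refine h_cont.continuousAt.eventually_lt continuousAt_const ?_
    simpa only [φ, sub_zero, one_mul, zero_mul, add_zero, h_comp, dist_self] using hr
  obtain ⟨η, hη, h_pos, h_lt⟩ :=
    ((h_near.filter_mono nhdsWithin_le_nhds).and (Ioo_mem_nhdsGT one_pos)).exists
  have h_add_one (t : ℝ) : φ η (t + 1) = φ η t + 1 := by
    simp only [φ, h.map_add_one]
    ring
  refine ⟨φ η, ⟨by fun_prop, ?_, h_add_one⟩, fun t => ?_⟩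
  · exact (h.monotone.const_mul (sub_pos.2 h_lt).le).add_strictMono
      (strictMono_id.const_mul h_pos)
  · have h_per : Periodic (fun t => dist (γ.toFun t) (γ'.toFun (φ η t))) 1 := fun t => by
      simp only [h_add_one, γ.periodic_toFun t, γ'.periodic_toFun (φ η t)]
    obtain ⟨u, hu, htu⟩ := h_per.exists_mem_Ico₀ one_pos t
    exact htu.trans_le (hη u (Ico_subset_Icc_self hu)).le

end Loop

section LoopClass

open scoped Topology

variable {c c' : LoopClass} {r ε : ℝ}

theorem Loop.eventually_not_isPinched {γ : Loop} (h : ¬ IsPinched γ.toFun 0 ε) :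
    ∀ᶠ r in 𝓝 0, ∀ γ' : Loop, γ.IsNear γ' r → ¬ IsPinched γ'.toFun 0 ε := by
  have h_tendsto : Tendsto (fun r : ℝ => 0 + 2 * r) (𝓝 0) (𝓝 0) :=
    Continuous.tendsto' (by fun_prop) 0 0 (by norm_num)
  filter_upwards [h_tendsto.eventually
    (_root_.eventually_not_isPinched γ.continuous_toFun γ.periodic_toFun h)] with r hr γ' h_near hγ'
  exact hr ((h_near.symm.isPinched hγ').anti (by linarith))

/-- A loop class is pinched at scale `ε` if some representative, equivalently each one, has a
double point that cuts it into two arcs of excursion at least `ε` each. -/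
def LoopClass.IsPinched (c : LoopClass) (ε : ℝ) : Prop :=
  ∃ γ : Loop, γ.cls = c ∧ _root_.IsPinched γ.toFun 0 ε

theorem Loop.isPinched_cls_iff {γ : Loop} : γ.cls.IsPinched ε ↔ IsPinched γ.toFun 0 ε := by
  refine ⟨fun ⟨γ', hγ', h_pinched⟩ => ?_, fun h => ⟨γ, rfl, h⟩⟩
  by_contra h
  obtain ⟨r, hr, h_pos⟩ := (((Loop.eventually_not_isPinched h).filter_mono
    nhdsWithin_le_nhds).and self_mem_nhdsWithin : ∀ᶠ r in 𝓝[>] (0 : ℝ), _).exists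
  exact hr γ' (Loop.cls_eq_cls_iff.1 hγ'.symm r h_pos) h_pinched

theorem LoopClass.exists_cls_eq (c : LoopClass) : ∃ γ : Loop, γ.cls = c := Quot.exists_rep c

theorem LoopClass.eventually_not_isPinched (h : ¬ c.IsPinched ε) :
    ∀ᶠ r in 𝓝 0, ∀ c' : LoopClass, c.dist c' < r → ¬ c'.IsPinched ε := by
  obtain ⟨γ, rfl⟩ := c.exists_cls_eq
  filter_upwards [Loop.eventually_not_isPinched (mt Loop.isPinched_cls_iff.2 h)] with r hr c' hc'
  obtain ⟨γ', rfl⟩ := c'.exists_cls_eq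
  exact mt Loop.isPinched_cls_iff.1 (hr γ' (Loop.isNear_of_dist_cls_lt hc'))

theorem LoopClass.IsPinched.le_diam (h : c.IsPinched ε) : ε ≤ c.diam := by
  obtain ⟨γ, rfl, s, t, -, -, -, h_exc, -⟩ := h
  exact h_exc.trans (γ.excursion_le_diam_cls s t)

theorem LoopClass.diam_le_of_dist_lt (h : c.dist c' < r) : c'.diam ≤ c.diam + 2 * r := by
  obtain ⟨γ, rfl⟩ := c.exists_cls_eq
  obtain ⟨γ', rfl⟩ := c'.exists_cls_eq
  exact (Loop.isNear_of_dist_cls_lt h).symm.diam_cls_le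

theorem Loop.isTrivial_cls {γ : Loop} (h : ∀ t, γ.toFun t = γ.toFun 0) : γ.cls.IsTrivial :=
  ⟨γ.toFun 0, by rw [γ.image_cls, funext h, range_const]⟩

theorem LoopClass.isSimple_iff_forall_not_isPinched (hc : ¬ c.IsTrivial) :
    c.IsSimple ↔ ∀ ε > 0, ¬ c.IsPinched ε := by
  refine ⟨?_, fun h => ?_⟩
  · rintro ⟨γ, rfl, h_inj⟩ ε hε
    exact mt Loop.isPinched_cls_iff.1 <|
      not_isPinched_of_injOn γ.periodic_toFun (fun s hs t ht => h_inj s t hs ht) hε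
  obtain ⟨γ, rfl⟩ := c.exists_cls_eq
  have h_not_pinched : ∀ ε > 0, ¬ _root_.IsPinched γ.toFun 0 ε := fun ε hε =>
    mt Loop.isPinched_cls_iff.2 (h ε hε)
  obtain ⟨g, φ, hg, hgp, hφ, h_comp, h_inj⟩ :=
    exists_injOn_comp_circleDeg1Lift_eq γ.continuous_toFun γ.periodic_toFun
      (mt Loop.isTrivial_cls hc) fun _ _ =>
        forall_eq_or_forall_eq_of_forall_not_isPinched γ.continuous_toFun h_not_pinched
  have h_cls : γ.cls = (⟨g, hg, hgp⟩ : Loop).cls :=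
    Loop.cls_eq_cls_of_comp_circleDeg1Lift hφ h_comp
  exact ⟨⟨g, hg, hgp⟩, h_cls.symm, fun s t hs ht => h_inj hs ht⟩

end LoopClass

section XSpace

open scoped Topology

variable {K : Set ℂ} {F G : XSpace K} {r ε : ℝ}

theorem XSpace.bddAbove_diam (F : XSpace K) : BddAbove (LoopClass.diam '' F.1) := by
  have h_bdd : BddAbove (LoopClass.diam '' {c ∈ F.1 | 1 < c.diam} ∪ Iic 1) :=
    ((F.2.2.2 1 one_pos).image _).bddAbove.union bddAbove_Iic
  refine h_bdd.mono (image_subset_iff.2 fun c hc => ?_)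
  rcases le_or_gt c.diam 1 with h_le | h_gt
  · exact Or.inr h_le
  · exact Or.inl (mem_image_of_mem _ ⟨hc, h_gt⟩)

theorem XSpace.exists_isMatching_of_dist_lt (h : F.dist G < r) :
    ∃ π, IsMatching F.1 G.1 π ∧ (∀ p ∈ π, LoopClass.dist p.1 p.2 < r) ∧
      ∀ c ∈ unmatched F.1 G.1 π, c.diam / 2 < r := by
  obtain ⟨C, hC⟩ := F.bddAbove_diam.union G.bddAbove_diam
  have h_unmatched : ∀ c ∈ unmatched F.1 G.1 ∅, c.diam / 2 ≤ max 0 (C / 2) := fun c hc =>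
    le_max_of_le_right <| div_le_div_of_nonneg_right
      (hC (hc.imp (fun h => mem_image_of_mem _ h.1) fun h => mem_image_of_mem _ h.1)) two_pos.le
  obtain ⟨r', ⟨_, π, hπ, h_matched, h_unmatched'⟩, hr'⟩ := exists_lt_of_csInf_lt (by exact
    ⟨_, le_max_left .., ∅, ⟨by simp, by simp, by simp⟩, by simp, h_unmatched⟩) h
  exact ⟨π, hπ, fun p hp => (h_matched p hp).trans_lt hr',
    fun c hc => (h_unmatched' c hc).trans_lt hr'⟩

theorem XSpace.exists_mem_dist_lt_of_dist_lt (h : F.dist G < r) {c : LoopClass} (hc : c ∈ G.1)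
    (hr : 2 * r ≤ c.diam) : ∃ c' ∈ F.1, c'.dist c < r := by
  obtain ⟨π, hπ, h_matched, h_unmatched⟩ := XSpace.exists_isMatching_of_dist_lt h
  have h_mem : c ∉ unmatched F.1 G.1 π := fun h' => by linarith [h_unmatched c h']
  obtain ⟨p, hp, rfl⟩ : ∃ p ∈ π, p.2 = c := by
    by_contra! h_ne
    exact h_mem (Or.inr ⟨hc, h_ne⟩)
  exact ⟨p.1, (hπ.1 p hp).1, h_matched p hp⟩

theorem XSpace.isOpen_setOf_forall_not_isPinched (hε : 0 < ε) :
    XSpace.IsOpen {F : XSpace K | ∀ c ∈ F.1, ¬ c.IsPinched ε} := by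
  intro F hF
  have h_large : ∀ᶠ r in 𝓝 0, ∀ c ∈ {c ∈ F.1 | ε / 2 < c.diam}, ∀ c' : LoopClass,
      c.dist c' < r → ¬ c'.IsPinched ε :=
    (eventually_all_finite (F.2.2.2 _ (half_pos hε))).2 fun c hc =>
      LoopClass.eventually_not_isPinched (hF c hc.1)
  obtain ⟨r, hr, h_pos, h_lt⟩ := ((h_large.filter_mono nhdsWithin_le_nhds).and
    (Ioo_mem_nhdsGT (show 0 < ε / 4 by positivity))).exists
  refine ⟨r, h_pos, fun G hFG c' hc' h_pinched => ?_⟩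
  have h_diam : ε ≤ c'.diam := h_pinched.le_diam
  obtain ⟨c, hc, h_dist⟩ := XSpace.exists_mem_dist_lt_of_dist_lt hFG hc' (by linarith)
  have h_diam_le : c'.diam ≤ c.diam + 2 * r := LoopClass.diam_le_of_dist_lt h_dist
  exact hr c ⟨hc, by linarith⟩ c' h_dist h_pinched

theorem XSpace.setOf_forall_isSimple_eq_iInter :
    {F : XSpace K | ∀ c ∈ F.1, c.IsSimple} =
      ⋂ n : ℕ, {F : XSpace K | ∀ c ∈ F.1, ¬ c.IsPinched (1 / (n + 1))} := by
  ext F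
  simp only [mem_iInter, mem_ofPred]
  refine ⟨fun h n c hc => ?_, fun h c hc => ?_⟩
  · exact (LoopClass.isSimple_iff_forall_not_isPinched (F.2.2.1 c hc).1).1 (h c hc) _
      Nat.one_div_pos_of_nat
  · refine (LoopClass.isSimple_iff_forall_not_isPinched (F.2.2.1 c hc).1).2 fun ε hε => ?_
    rintro ⟨γ, hγ, h_pinched⟩
    obtain ⟨n, hn⟩ := exists_nat_one_div_lt hε
    exact h n c hc ⟨γ, hγ, h_pinched.anti hn.le⟩

end XSpace

theorem simpleness_is_borel_general (K : Set ℂ) :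
    MeasurableSet {F : XSpace K | ∀ c ∈ F.1, c.IsSimple} := by
  rw [XSpace.setOf_forall_isSimple_eq_iInter]
  exact MeasurableSet.iInter fun n => MeasurableSpace.measurableSet_generateFrom
    (XSpace.isOpen_setOf_forall_not_isPinched Nat.one_div_pos_of_nat)

/-- For every compact `K ⊂ ℂ`, the set of collections all of whose loops
are simple is a Borel subset of `(X(K), d_X)`. -/
theorem simpleness_is_borel (K : Set ℂ) (hK : IsCompact K) :
    MeasurableSet {F : XSpace K | ∀ c ∈ F.1, c.IsSimple} := by
  exact simpleness_is_borel_general K
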